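/- (Proposition 2.1, existence and pathwise uniqueness.) Let U be a uniform random variable on I, θ₀ a 𝕋-valued random variable with law μ̄₀ ∈ 𝒫(𝕋), and B a standard Brownian motion, with U, θ₀ and B mutually independent. Then there exists a solution θ of the nonlinear equation for the labeled graphon W with data (U, θ₀, B); moreover the solution is pathwise unique: any two solutions with the same U, θ₀ and B are P-almost surely equal as elements of C([0,T],𝕋). -/

import Mathlib

open MeasureTheory ProbabilityTheory Real Set Filter Topology

noncomputable section

/-- The one-dimensional torus `𝕋 = ℝ/(2πℤ)`. -/
abbrev Torus : Type := AddCircle (2 * Real.pi)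

instance : Fact (0 < 2 * Real.pi) := ⟨by positivity⟩

/-- The label space `I = [0,1]`. -/
abbrev I01 : Set ℝ := Set.Icc (0:ℝ) 1

/-- `F` is bounded and Lipschitz. -/
def BddLip (F : Torus → ℝ) : Prop :=
  (∃ K : NNReal, LipschitzWith K F) ∧ ∃ M : ℝ, ∀ a, |F a| ≤ M

/-- `Γ` is bounded and Lipschitz (jointly on `𝕋 × 𝕋`). -/
def BddLip2 (Γ : Torus → Torus → ℝ) : Prop :=
  (∃ K : NNReal, LipschitzWith K (fun p : Torus × Torus => Γ p.1 p.2)) ∧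
    ∃ M : ℝ, ∀ a b, |Γ a b| ≤ M

/-- A labeled graphon: a symmetric measurable function `I² → [0,1]`. -/
def IsGraphon (W : ℝ → ℝ → ℝ) : Prop :=
  Measurable (fun p : ℝ × ℝ => W p.1 p.2) ∧ (∀ x y, W x y ∈ Set.Icc (0:ℝ) 1) ∧
    ∀ x y, W x y = W y x

/-- A standard Brownian motion on `[0,T]`: a continuous real-valued process starting at `0`
whose increment `B_t − B_s` is Gaussian of mean `0` and variance `t − s` and is independent
of the past `(B_r)_{r ≤ s}`. -/
def IsStandardBM {Ω : Type*} [MeasurableSpace Ω] (T : ℝ) (P : Measure Ω)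
    (B : Ω → ℝ → ℝ) : Prop :=
  (∀ ω, B ω 0 = 0) ∧ (∀ ω, ContinuousOn (B ω) (Set.Icc 0 T)) ∧
  (∀ s : ℝ, Measurable (fun ω => B ω s)) ∧
  (∀ s t : ℝ, 0 ≤ s → s ≤ t → t ≤ T →
    P.map (fun ω => B ω t - B ω s) = ProbabilityTheory.gaussianReal 0 (Real.toNNReal (t - s)) ∧
    ProbabilityTheory.IndepFun (fun ω => B ω t - B ω s)
      (fun ω => (fun r : Set.Icc (0:ℝ) s => B ω r)) P)

/-- The integrated drift
`∫₀ᵗ F(p_s) ds + ∫₀ᵗ ∫_I W(x,y) ( ∫_𝕋 Γ(p_s, u) μ^y_s(du) ) dy ds`. -/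
def drift (F : Torus → ℝ) (Γ : Torus → Torus → ℝ) (W : ℝ → ℝ → ℝ)
    (μ : ℝ → ℝ → Measure Torus) (x : ℝ) (p : ℝ → Torus) (t : ℝ) : ℝ :=
  (∫ s in Set.Icc 0 t, F (p s)) +
  ∫ s in Set.Icc 0 t, ∫ y in I01, W x y * ∫ u, Γ (p s) u ∂(μ y s)

/-- The data `(U, θ0, B)` of the nonlinear equation: `U` uniform on `I`, `θ0` with law
`μ0`, `B` a standard Brownian motion, the three mutually independent. -/
def MeanFieldData {Ω : Type*} [MeasurableSpace Ω] (T : ℝ) (P : Measure Ω)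
    (μ0 : Measure Torus) (U : Ω → ℝ) (θ0 : Ω → Torus) (B : Ω → ℝ → ℝ) : Prop :=
  Measurable U ∧ P.map U = volume.restrict I01 ∧
  Measurable θ0 ∧ P.map θ0 = μ0 ∧
  IsStandardBM T P B ∧
  ProbabilityTheory.IndepFun U θ0 P ∧
  ProbabilityTheory.IndepFun (fun ω => (U ω, θ0 ω)) (fun ω => B ω) P

/-- A continuous `𝕋`-valued process `θ` is a solution of the nonlinear equation for the
labeled graphon `W` with data `(U, θ0, B)` if, `P`-a.s., for all `t ∈ [0,T]`,
`θ_t = θ0 + π( ∫₀ᵗ F(θ_s) ds + ∫₀ᵗ ∫_I W(U,y) (∫_𝕋 Γ(θ_s,u) μ^y_s(du)) dy ds + B_t )`,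
where `μ^y_s` (here the kernel `μker y s`) is a regular conditional distribution of `θ_s`
given `U = y`. -/
structure IsMeanFieldSolution {Ω : Type*} [MeasurableSpace Ω] (T : ℝ) (P : Measure Ω)
    (F : Torus → ℝ) (Γ : Torus → Torus → ℝ) (W : ℝ → ℝ → ℝ)
    (U : Ω → ℝ) (θ0 : Ω → Torus) (B : Ω → ℝ → ℝ)
    (θ : Ω → ℝ → Torus) (μker : ℝ → ℝ → Measure Torus) : Prop where
  meas : ∀ s : ℝ, Measurable (fun ω => θ ω s)
  cont : ∀ ω, ContinuousOn (θ ω) (Set.Icc 0 T)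
  kerMeas : ∀ s : ℝ, Measurable (fun y => μker y s)
  kerProb : ∀ y s, IsProbabilityMeasure (μker y s)
  disint : ∀ s ∈ Set.Icc (0:ℝ) T, ∀ S : Set ℝ, MeasurableSet S →
    ∀ A : Set Torus, MeasurableSet A →
      P {ω | U ω ∈ S ∧ θ ω s ∈ A} = ∫⁻ y in S ∩ I01, μker y s A ∂volume
  sde : ∀ᵐ ω ∂P, ∀ t ∈ Set.Icc (0:ℝ) T,
    θ ω t = θ0 ω + ((drift F Γ W μker (U ω) (θ ω) t + B ω t : ℝ) : Torus)


/-!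
The conditional law of `θ_s` given `U = y`, averaged over `y`, is the joint law of `(U, θ_s)`, so
the drift of the particle with random input `ω` is the average over an independent copy `ω'` of
`F (θ_s ω) + W (U ω) (U ω') Γ (θ_s ω) (θ_s ω')`. The nonlinear equation thus becomes a fixed point
problem for processes on `Ω`, in which the initial condition and the noise only translate the
integrated drift and therefore do not affect distances. Its Picard map contracts consecutive
iterates at a factorial rate, by a bound uniform in `ω`; this gives a fixed point for every `ω`, and
the same bound off a null set gives uniqueness.
-/

section MeanField

open Function (uncurry)

variable {Ω E V : Type*} [MeasurableSpace Ω] [NormedAddCommGroup V]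
  {P : Measure Ω} {h : Ω × Ω → E × E → V} {ψ : Ω × ℝ → V → E} {θ θ' : Ω → ℝ → E}
  {C : ℝ} {L : NNReal}

theorem integrable_interaction [MeasurableSpace E] [MeasurableSpace V] [BorelSpace V]
    [SecondCountableTopology V] [IsFiniteMeasure P] (hh : Measurable (uncurry h))
    (hC : ∀ p z, ‖h p z‖ ≤ C) (hθ : Measurable (uncurry θ)) (ω : Ω) (s : ℝ) :
    Integrable (fun ω' => h (ω, ω') (θ ω s, θ ω' s)) P := by
  have harg : Measurable fun ω' => uncurry h ((ω, ω'), θ ω s, uncurry θ (ω', s)) := by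
    fun_prop
  exact .of_bound harg.aestronglyMeasurable C (.of_forall fun ω' => hC _ _)

variable [NormedSpace ℝ V]

theorem norm_integral_le_of_norm_le_abs_pow {f : ℝ → V} {c t : ℝ} {n : ℕ}
    (hf : ∀ s ∈ uIoc 0 t, ‖f s‖ ≤ c * |s| ^ n) :
    ‖∫ s in 0..t, f s‖ ≤ c * (|t| ^ (n + 1) / (n + 1)) := by
  have hint : IntegrableOn (fun s : ℝ => c * |s| ^ n) (uIoc 0 t) :=
    Continuous.integrableOn_uIoc (by fun_prop)
  calc ‖∫ s in 0..t, f s‖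
      = ‖∫ s in uIoc 0 t, f s‖ := intervalIntegral.norm_integral_eq_norm_integral_uIoc f
    _ ≤ ∫ s in uIoc 0 t, c * |s| ^ n :=
        norm_integral_le_of_norm_le hint ((ae_restrict_mem measurableSet_uIoc).mono hf)
    _ = c * (|t| ^ (n + 1) / (n + 1)) := by
        rw [integral_const_mul]
        simpa only [sub_zero] using congrArg (c * ·) (integral_pow_abs_sub_uIoc (a := 0) (b := t) n)

/-- The `n`-th term of the exponential series that bounds the distance between consecutive
Picard iterates for an interaction bounded by `C` and `L`-Lipschitz. -/
def picardBound (C L : ℝ) (n : ℕ) (t : ℝ) : ℝ :=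
  2 * C * L ^ n / (n + 1).factorial * |t| ^ (n + 1)

theorem summable_picardBound (C L t : ℝ) : Summable fun n => picardBound C L n t := by
  refine ((Real.summable_pow_div_factorial (|L| * |t|)).mul_left |2 * C * t|).of_norm_bounded ?_
  intro n
  calc ‖picardBound C L n t‖ = |2 * C * t| * ((|L| * |t|) ^ n / (n + 1).factorial) := by
        simp only [picardBound, norm_mul, norm_div, norm_pow, Real.norm_eq_abs, abs_abs, abs_mul,
          Nat.abs_cast]
        ring
    _ ≤ |2 * C * t| * ((|L| * |t|) ^ n / n.factorial) := by
        gcongr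
        exact n.le_succ

/-- The velocity at time `s` of a particle with random input `ω` in the field generated by the
process `θ`: the interaction `h` averaged over an independent copy of the random input. -/
def meanVelocity (P : Measure Ω) (h : Ω × Ω → E × E → V) (θ : Ω → ℝ → E) (ω : Ω) (s : ℝ) : V :=
  ∫ ω', h (ω, ω') (θ ω s, θ ω' s) ∂P

/-- The Picard map of the mean-field equation `θ_t = ψ_t (∫₀ᵗ v_s(θ) ds)`, where `v(θ)` is the
mean velocity and the observation `ψ` turns a displacement in `V` into a state in `E`; the
initial condition and the noise enter through `ψ`. -/
def picardMap (P : Measure Ω) (h : Ω × Ω → E × E → V) (ψ : Ω × ℝ → V → E) (θ : Ω → ℝ → E)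
    (ω : Ω) (t : ℝ) : E :=
  ψ (ω, t) (∫ s in 0..t, meanVelocity P h θ ω s)

theorem norm_meanVelocity_le [IsProbabilityMeasure P] (hC : ∀ p z, ‖h p z‖ ≤ C) (ω : Ω) (s : ℝ) :
    ‖meanVelocity P h θ ω s‖ ≤ C := by
  simpa only [meanVelocity, probReal_univ, mul_one] using norm_integral_le_of_norm_le_const (μ := P)
    (.of_forall fun ω' => hC (ω, ω') (θ ω s, θ ω' s))

section Measurability

variable [MeasurableSpace E] [MeasurableSpace V] [BorelSpace V] [SecondCountableTopology V]

theorem measurable_uncurry_meanVelocity [SFinite P] (hh : Measurable (uncurry h))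
    (hθ : Measurable (uncurry θ)) : Measurable (uncurry (meanVelocity P h θ)) := by
  have harg : Measurable fun q : (Ω × ℝ) × Ω =>
      uncurry h ((q.1.1, q.2), uncurry θ q.1, uncurry θ (q.2, q.1.2)) := by
    fun_prop
  exact harg.stronglyMeasurable.integral_prod_right.measurable

theorem intervalIntegrable_meanVelocity [IsProbabilityMeasure P] (hh : Measurable (uncurry h))
    (hC : ∀ p z, ‖h p z‖ ≤ C) (hθ : Measurable (uncurry θ)) (ω : Ω) (a b : ℝ) :
    IntervalIntegrable (meanVelocity P h θ ω) volume a b :=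
  (intervalIntegrable_const (c := C)).mono_fun'
    ((measurable_uncurry_meanVelocity hh hθ).of_uncurry_left.aestronglyMeasurable)
    (.of_forall fun s => norm_meanVelocity_le hC ω s)

theorem measurable_uncurry_primitive {v : Ω → ℝ → V} (hv : Measurable (uncurry v))
    (hint : ∀ ω a b, IntervalIntegrable (v ω) volume a b) :
    Measurable fun q : Ω × ℝ => ∫ s in 0..q.2, v q.1 s := by
  have hmeas (t : ℝ) : Measurable fun ω => ∫ s in 0..t, v ω s :=
    (hv.stronglyMeasurable.integral_prod_right.sub
      hv.stronglyMeasurable.integral_prod_right).measurable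
  have hcont (ω : Ω) : Continuous fun t => ∫ s in 0..t, v ω s :=
    intervalIntegral.continuous_primitive (hint ω) 0
  exact (measurable_uncurry_of_continuous_of_measurable
    (u := fun t ω => ∫ s in 0..t, v ω s) hcont hmeas).comp measurable_swap

theorem measurable_uncurry_picardMap [IsProbabilityMeasure P] (hh : Measurable (uncurry h))
    (hC : ∀ p z, ‖h p z‖ ≤ C) (hψ : Measurable (uncurry ψ)) (hθ : Measurable (uncurry θ)) :
    Measurable (uncurry (picardMap P h ψ θ)) :=
  hψ.comp (measurable_id.prodMk (measurable_uncurry_primitive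
    (measurable_uncurry_meanVelocity hh hθ) (intervalIntegrable_meanVelocity hh hC hθ)))

theorem continuous_picardMap [TopologicalSpace E] [IsProbabilityMeasure P]
    (hh : Measurable (uncurry h)) (hC : ∀ p z, ‖h p z‖ ≤ C) (hθ : Measurable (uncurry θ)) {ω : Ω}
    (hψ : Continuous fun q : ℝ × V => ψ (ω, q.1) q.2) : Continuous (picardMap P h ψ θ ω) :=
  hψ.comp (continuous_id.prodMk (intervalIntegral.continuous_primitive
    (intervalIntegrable_meanVelocity hh hC hθ ω) 0))

theorem tendsto_picardMap [TopologicalSpace E] [IsProbabilityMeasure P]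
    (hh : Measurable (uncurry h)) (hC : ∀ p z, ‖h p z‖ ≤ C) (hcont : ∀ p, Continuous (h p))
    (hψ : ∀ q, Continuous (ψ q)) {x : ℕ → Ω → ℝ → E} (hx : ∀ n, Measurable (uncurry (x n)))
    (hlim : ∀ ω t, Tendsto (fun n => x n ω t) atTop (𝓝 (θ ω t))) (ω : Ω) (t : ℝ) :
    Tendsto (fun n => picardMap P h ψ (x n) ω t) atTop (𝓝 (picardMap P h ψ θ ω t)) := by
  have hvel (s : ℝ) :
      Tendsto (fun n => meanVelocity P h (x n) ω s) atTop (𝓝 (meanVelocity P h θ ω s)) :=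
    tendsto_integral_of_dominated_convergence (fun _ => C)
      (fun n => (integrable_interaction hh hC (hx n) ω s).aestronglyMeasurable)
      (integrable_const C) (fun n => .of_forall fun ω' => hC _ _)
      (.of_forall fun ω' => ((hcont _).tendsto _).comp ((hlim ω s).prodMk_nhds (hlim ω' s)))
  refine ((hψ (ω, t)).tendsto _).comp ?_
  exact intervalIntegral.tendsto_integral_filter_of_dominated_convergence (fun _ => C)
    (.of_forall fun n =>
      (measurable_uncurry_meanVelocity hh (hx n)).of_uncurry_left.aestronglyMeasurable)
    (.of_forall fun n => .of_forall fun s _ => norm_meanVelocity_le hC ω s)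
    intervalIntegrable_const (.of_forall fun s _ => hvel s)

end Measurability

section Contraction

variable [MetricSpace E] [MeasurableSpace E] [MeasurableSpace V] [BorelSpace V]
  [SecondCountableTopology V] [IsProbabilityMeasure P]

theorem norm_meanVelocity_sub_le (hh : Measurable (uncurry h)) (hC : ∀ p z, ‖h p z‖ ≤ C)
    (hL : ∀ p, LipschitzWith L (h p)) (hθ : Measurable (uncurry θ))
    (hθ' : Measurable (uncurry θ')) {ω : Ω} {s r : ℝ} (hω : dist (θ ω s) (θ' ω s) ≤ r)
    (hae : ∀ᵐ ω' ∂P, dist (θ ω' s) (θ' ω' s) ≤ r) :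
    ‖meanVelocity P h θ ω s - meanVelocity P h θ' ω s‖ ≤ L * r := by
  have hpair : ∀ᵐ ω' ∂P,
      ‖h (ω, ω') (θ ω s, θ ω' s) - h (ω, ω') (θ' ω s, θ' ω' s)‖ ≤ L * r := by
    filter_upwards [hae] with ω' hω'
    rw [← dist_eq_norm]
    exact (hL _).dist_le_mul_of_le (max_le hω hω')
  rw [meanVelocity, meanVelocity, ← integral_sub (integrable_interaction hh hC hθ ω s)
    (integrable_interaction hh hC hθ' ω s)]
  simpa only [probReal_univ, mul_one] using norm_integral_le_of_norm_le_const hpair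

theorem dist_picardMap_le (hh : Measurable (uncurry h)) (hC : ∀ p z, ‖h p z‖ ≤ C)
    (hψ : ∀ q, LipschitzWith 1 (ψ q)) (hθ : Measurable (uncurry θ))
    (hθ' : Measurable (uncurry θ')) {ω : Ω} {t c : ℝ} {n : ℕ}
    (hvel : ∀ s ∈ uIoc 0 t,
      ‖meanVelocity P h θ ω s - meanVelocity P h θ' ω s‖ ≤ c * |s| ^ n) :
    dist (picardMap P h ψ θ ω t) (picardMap P h ψ θ' ω t) ≤ c * (|t| ^ (n + 1) / (n + 1)) := by
  refine ((hψ (ω, t)).dist_le_mul _ _).trans ?_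
  rw [NNReal.coe_one, one_mul, dist_eq_norm, ← intervalIntegral.integral_sub
    (intervalIntegrable_meanVelocity hh hC hθ ω 0 t)
    (intervalIntegrable_meanVelocity hh hC hθ' ω 0 t)]
  exact norm_integral_le_of_norm_le_abs_pow hvel

/-- Yields convergence of the iteration when `y` is the shift of `x`, and uniqueness when both
sequences are constant. -/
theorem dist_picard_iterates_le (hh : Measurable (uncurry h)) (hC : ∀ p z, ‖h p z‖ ≤ C)
    (hL : ∀ p, LipschitzWith L (h p)) (hψ : ∀ q, LipschitzWith 1 (ψ q)) {x y : ℕ → Ω → ℝ → E}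
    (hx : ∀ n, Measurable (uncurry (x n))) (hy : ∀ n, Measurable (uncurry (y n)))
    {G : Set Ω} (hG : ∀ᵐ ω ∂P, ω ∈ G) {J : Set ℝ} [J.OrdConnected] (hJ : 0 ∈ J)
    (hxs : ∀ n, ∀ ω ∈ G, EqOn (x (n + 1) ω) (picardMap P h ψ (x n) ω) J)
    (hys : ∀ n, ∀ ω ∈ G, EqOn (y (n + 1) ω) (picardMap P h ψ (y n) ω) J) (n : ℕ) :
    ∀ ω ∈ G, ∀ t ∈ J, dist (x (n + 1) ω t) (y (n + 1) ω t) ≤ picardBound C L n t := by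
  induction n with
  | zero =>
    intro ω hω t ht
    rw [hxs 0 ω hω ht, hys 0 ω hω ht]
    have hvel (s : ℝ) :
        ‖meanVelocity P h (x 0) ω s - meanVelocity P h (y 0) ω s‖ ≤ 2 * C * |s| ^ 0 := by
      rw [pow_zero, mul_one, two_mul]
      exact (norm_sub_le _ _).trans
        (add_le_add (norm_meanVelocity_le hC ω s) (norm_meanVelocity_le hC ω s))
    simpa [picardBound] using dist_picardMap_le hh hC hψ (hx 0) (hy 0) (t := t) fun s _ => hvel s
  | succ n ih =>
    intro ω hω t ht
    rw [hxs (n + 1) ω hω ht, hys (n + 1) ω hω ht]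
    have hvel : ∀ s ∈ uIoc 0 t,
        ‖meanVelocity P h (x (n + 1)) ω s - meanVelocity P h (y (n + 1)) ω s‖ ≤
          2 * C * L ^ (n + 1) / (n + 1).factorial * |s| ^ (n + 1) := by
      intro s hs
      have hsJ : s ∈ J := OrdConnected.uIcc_subset ‹_› hJ ht (uIoc_subset_uIcc hs)
      refine (norm_meanVelocity_sub_le hh hC hL (hx _) (hy _) (ih ω hω s hsJ)
        (hG.mono fun ω' hω' => ih ω' hω' s hsJ)).trans_eq ?_
      rw [picardBound, pow_succ]
      ring
    refine (dist_picardMap_le hh hC hψ (hx _) (hy _) hvel).trans_eq ?_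
    rw [picardBound, Nat.factorial_succ (n + 1)]
    push_cast
    field_simp

theorem ae_eqOn_of_eqOn_picardMap (hh : Measurable (uncurry h)) (hC : ∀ p z, ‖h p z‖ ≤ C)
    (hL : ∀ p, LipschitzWith L (h p)) (hψ : ∀ q, LipschitzWith 1 (ψ q))
    (hθ : Measurable (uncurry θ)) (hθ' : Measurable (uncurry θ'))
    {J : Set ℝ} [J.OrdConnected] (hJ : 0 ∈ J)
    (hfix : ∀ᵐ ω ∂P, EqOn (θ ω) (picardMap P h ψ θ ω) J)
    (hfix' : ∀ᵐ ω ∂P, EqOn (θ' ω) (picardMap P h ψ θ' ω) J) :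
    ∀ᵐ ω ∂P, EqOn (θ ω) (θ' ω) J := by
  have hG := hfix.and hfix'
  filter_upwards [hG] with ω hω t ht
  have hle (n : ℕ) : dist (θ ω t) (θ' ω t) ≤ picardBound C L n t :=
    dist_picard_iterates_le hh hC hL hψ (fun _ => hθ) (fun _ => hθ') hG hJ
      (fun _ _ hω => hω.1) (fun _ _ hω => hω.2) n ω hω t ht
  exact dist_le_zero.1
    (ge_of_tendsto' (summable_picardBound C L t).tendsto_atTop_zero hle)

theorem exists_fixedPoint_picardMap [CompleteSpace E] [BorelSpace E]
    (hh : Measurable (uncurry h)) (hC : ∀ p z, ‖h p z‖ ≤ C)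
    (hL : ∀ p, LipschitzWith L (h p)) (hψm : Measurable (uncurry ψ))
    (hψ : ∀ q, LipschitzWith 1 (ψ q)) :
    ∃ θ : Ω → ℝ → E, Measurable (uncurry θ) ∧ picardMap P h ψ θ = θ := by
  let x (n : ℕ) : Ω → ℝ → E := (picardMap P h ψ)^[n] fun ω t => ψ (ω, t) 0
  have hxs (n : ℕ) : x (n + 1) = picardMap P h ψ (x n) := Function.iterate_succ_apply' ..
  have hx (n : ℕ) : Measurable (uncurry (x n)) := by
    induction n with
    | zero => exact hψm.comp measurable_prodMk_right
    | succ n ih => rw [hxs]; exact measurable_uncurry_picardMap hh hC hψm ih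
  have hdist (n : ℕ) (ω : Ω) (t : ℝ) :
      dist (x (n + 1) ω t) (x (n + 2) ω t) ≤ picardBound C L n t :=
    dist_picard_iterates_le hh hC hL hψ hx (fun n => hx (n + 1)) (.of_forall mem_univ)
      (mem_univ 0) (fun n ω _ t _ => by rw [hxs]) (fun n ω _ t _ => by rw [hxs (n + 1)]) n ω
      (mem_univ ω) t (mem_univ t)
  have hconv (ω : Ω) (t : ℝ) : ∃ a, Tendsto (fun n => x n ω t) atTop (𝓝 a) := by
    obtain ⟨a, ha⟩ := cauchySeq_tendsto_of_complete (cauchySeq_of_dist_le_of_summable _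
      (fun n => hdist n ω t) (summable_picardBound C L t))
    exact ⟨a, (tendsto_add_atTop_iff_nat 1).1 ha⟩
  choose θ hlim using hconv
  refine ⟨θ, measurable_of_tendsto_metrizable hx (tendsto_pi_nhds.2 fun q => hlim q.1 q.2), ?_⟩
  ext ω t
  have hΦ := tendsto_picardMap (P := P) (h := h) (ψ := ψ) hh hC (fun p => (hL p).continuous)
    (fun q => (hψ q).continuous) hx hlim ω t
  refine tendsto_nhds_unique hΦ ?_
  simpa only [← hxs] using (tendsto_add_atTop_iff_nat 1).2 (hlim ω t)

end Contraction

end MeanField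

section ConditionalDistribution

variable {Ω α β : Type*} [MeasurableSpace Ω] [MeasurableSpace α] [MeasurableSpace β]
  {P : Measure Ω} {X : Ω → α} {Y : Ω → β} {κ : Kernel α β} [IsSFiniteKernel κ]

theorem hasCondDistrib_iff_measure_eq_setLIntegral [IsFiniteMeasure P] (hX : Measurable X)
    (hY : Measurable Y) :
    HasCondDistrib Y X κ P ↔ ∀ S, MeasurableSet S → ∀ A, MeasurableSet A →
      P {ω | X ω ∈ S ∧ Y ω ∈ A} = ∫⁻ x in S, κ x A ∂(P.map X) := by
  have hXY : Measurable fun ω => (X ω, Y ω) := hX.prodMk hY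
  have hrect {S : Set α} {A : Set β} (hS : MeasurableSet S) (hA : MeasurableSet A) :
      P.map (fun ω => (X ω, Y ω)) (S ×ˢ A) = (P.map X ⊗ₘ κ) (S ×ˢ A) ↔
        P {ω | X ω ∈ S ∧ Y ω ∈ A} = ∫⁻ x in S, κ x A ∂(P.map X) := by
    rw [Measure.map_apply hXY (hS.prod hA), Measure.compProd_apply_prod hS hA]
    rfl
  constructor
  · intro hκ S hS A hA
    exact (hrect hS hA).1 (congrArg (· (S ×ˢ A)) hκ.map_eq)
  · intro hκ
    exact ⟨hXY.aemeasurable, Measure.ext_prod fun hS hA => (hrect hS hA).2 (hκ _ hS _ hA)⟩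

theorem integral_integral_of_hasCondDistrib {G : Type*} [NormedAddCommGroup G] [NormedSpace ℝ G]
    [SFinite P] (hκ : HasCondDistrib Y X κ P) {f : α × β → G} (hf : StronglyMeasurable f)
    (hint : Integrable (fun ω => f (X ω, Y ω)) P) :
    ∫ x, ∫ y, f (x, y) ∂κ x ∂(P.map X) = ∫ ω, f (X ω, Y ω) ∂P := by
  have hint' : Integrable f (P.map X ⊗ₘ κ) := by
    rw [← hκ.map_eq]
    exact (integrable_map_measure hf.aestronglyMeasurable hκ.aemeasurable).2 hint
  rw [← Measure.integral_compProd hint']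
  exact (hκ.integral_comp hf.aestronglyMeasurable).symm

end ConditionalDistribution

section ClampPath

variable {Ω E : Type*} {T : ℝ} {X : Ω → ℝ → E}

/-- The process `X` on `[0, T]`, extended to all times by freezing it at the endpoints. It makes
a process with continuous paths on `[0, T]` jointly measurable on all of `Ω × ℝ`. -/
def clampPath (hT : 0 ≤ T) (X : Ω → ℝ → E) (ω : Ω) : ℝ → E :=
  IccExtend hT ((Icc 0 T).domRestrict (X ω))

theorem eqOn_clampPath (hT : 0 ≤ T) (ω : Ω) :
    EqOn (clampPath hT X ω) (X ω) (Icc 0 T) :=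
  fun _ ht => IccExtend_of_mem hT _ ht

variable [TopologicalSpace E]

theorem continuous_clampPath (hT : 0 ≤ T) {ω : Ω} (hX : ContinuousOn (X ω) (Icc 0 T)) :
    Continuous (clampPath hT X ω) :=
  hX.domRestrict.Icc_extend'

theorem measurable_uncurry_clampPath [TopologicalSpace.PseudoMetrizableSpace E] [MeasurableSpace E]
    [BorelSpace E] [MeasurableSpace Ω] (hT : 0 ≤ T) (hmeas : ∀ t, Measurable fun ω => X ω t)
    (hcont : ∀ ω, ContinuousOn (X ω) (Icc 0 T)) :
    Measurable (Function.uncurry (clampPath hT X)) :=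
  (measurable_uncurry_of_continuous_of_measurable (u := fun t ω => clampPath hT X ω t)
    (fun ω => continuous_clampPath hT (hcont ω)) fun _ => hmeas _).comp measurable_swap

end ClampPath

section Torus

open Function (uncurry)

variable {Ω : Type*} {F : Torus → ℝ} {Γ : Torus → Torus → ℝ} {W : ℝ → ℝ → ℝ} {U : Ω → ℝ}
  {θ0 : Ω → Torus} {b : Ω → ℝ → ℝ} {KF KΓ M : NNReal}

/-- The interaction of the nonlinear equation: the velocity of an oscillator at `z.1` with input
`p.1` in the presence of a single oscillator at `z.2` with input `p.2`, their labels being `U p.1`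
and `U p.2`. -/
def graphonInteraction (F : Torus → ℝ) (Γ : Torus → Torus → ℝ) (W : ℝ → ℝ → ℝ) (U : Ω → ℝ)
    (p : Ω × Ω) (z : Torus × Torus) : ℝ :=
  F z.1 + W (U p.1) (U p.2) * Γ z.1 z.2

/-- The state of an oscillator with initial phase `θ0` and noise `b` whose integrated drift up to
the given time is `x`. -/
def torusState (θ0 : Ω → Torus) (b : Ω → ℝ → ℝ) (q : Ω × ℝ) (x : ℝ) : Torus :=
  θ0 q.1 + ((x + b q.1 q.2 : ℝ) : Torus)

theorem lipschitzWith_torusState (q : Ω × ℝ) : LipschitzWith 1 (torusState θ0 b q) := by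
  refine .of_dist_le_mul fun x y => ?_
  rw [NNReal.coe_one, one_mul, torusState, torusState, dist_add_left, dist_eq_norm,
    ← AddCircle.coe_sub, add_sub_add_right_eq_sub, dist_eq_norm]
  exact QuotientAddGroup.norm_mk_le_norm

theorem continuous_torusState {ω : Ω} (hb : Continuous (b ω)) :
    Continuous fun q : ℝ × ℝ => torusState θ0 b (ω, q.1) q.2 := by
  have hlift : Continuous fun q : ℝ × ℝ => q.2 + b ω q.1 := by fun_prop
  exact (continuous_const_add (θ0 ω)).comp ((AddCircle.continuous_mk' (2 * π)).comp hlift)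

theorem lipschitzWith_graphonInteraction (hF : LipschitzWith KF F)
    (hΓ : LipschitzWith KΓ (uncurry Γ)) (hM : ∀ x y, ‖W x y‖ ≤ M) (p : Ω × Ω) :
    LipschitzWith (KF + M * KΓ) (graphonInteraction F Γ W U p) := by
  refine (hF.comp LipschitzWith.prod_fst).weaken (mul_one KF).le |>.add ?_
  refine .of_dist_le_mul fun z z' => ?_
  rw [dist_eq_norm, ← mul_sub, norm_mul, ← dist_eq_norm, NNReal.coe_mul, mul_assoc]
  exact mul_le_mul (hM _ _) (hΓ.dist_le_mul z z') dist_nonneg M.2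

theorem exists_norm_graphonInteraction_le (hF : Continuous F) (hΓ : Continuous (uncurry Γ))
    (hM : ∀ x y, ‖W x y‖ ≤ M) :
    ∃ C, ∀ p z, ‖graphonInteraction F Γ W U p z‖ ≤ C := by
  obtain ⟨CF, hCF⟩ := isCompact_univ.exists_bound_of_continuousOn hF.continuousOn
  obtain ⟨CΓ, hCΓ⟩ := isCompact_univ.exists_bound_of_continuousOn hΓ.continuousOn
  refine ⟨CF + M * CΓ, fun p z => (norm_add_le _ _).trans (add_le_add (hCF _ trivial) ?_)⟩
  rw [norm_mul]
  exact mul_le_mul (hM _ _) (hCΓ z trivial) (norm_nonneg _) M.2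

variable [MeasurableSpace Ω] {P : Measure Ω}

theorem measurable_uncurry_torusState (hθ0 : Measurable θ0) (hb : Measurable (uncurry b)) :
    Measurable (uncurry (torusState θ0 b)) :=
  (hθ0.comp (measurable_fst.comp measurable_fst)).add
    (AddCircle.measurable_mk'.comp (measurable_snd.add (hb.comp measurable_fst)))

theorem measurable_uncurry_graphonInteraction (hF : Measurable F) (hΓ : Measurable (uncurry Γ))
    (hW : Measurable (uncurry W)) (hU : Measurable U) :
    Measurable (uncurry (graphonInteraction F Γ W U)) := by
  have hcoef : Measurable fun q : (Ω × Ω) × Torus × Torus => uncurry W (U q.1.1, U q.1.2) := by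
    fun_prop
  exact (hF.comp measurable_snd.fst).add (hcoef.mul (hΓ.comp measurable_snd))

theorem drift_congr {μ : ℝ → ℝ → Measure Torus} {x t : ℝ} {p q : ℝ → Torus}
    (hpq : EqOn p q (Icc 0 t)) : drift F Γ W μ x p t = drift F Γ W μ x q t := by
  unfold drift
  congr 1 <;> refine setIntegral_congr_fun measurableSet_Icc fun s hs => ?_ <;> simp only [hpq hs]

variable [IsProbabilityMeasure P] {θ : Ω → ℝ → Torus}

theorem meanVelocity_graphonInteraction (hF : Continuous F) (hΓ : Continuous (uncurry Γ))
    (hW : Measurable (uncurry W)) (hM : ∀ x y, ‖W x y‖ ≤ M) (hU : Measurable U)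
    (hθ : Measurable (uncurry θ)) {s : ℝ} {κ : Kernel ℝ Torus} [IsSFiniteKernel κ]
    (hκ : HasCondDistrib (fun ω => θ ω s) U κ P) (ω : Ω) :
    meanVelocity P (graphonInteraction F Γ W U) θ ω s =
      F (θ ω s) + ∫ y, W (U ω) y * ∫ u, Γ (θ ω s) u ∂κ y ∂(P.map U) := by
  obtain ⟨C, hC⟩ := exists_norm_graphonInteraction_le (U := U) hF hΓ hM
  have hh := measurable_uncurry_graphonInteraction hF.measurable hΓ.measurable hW hU
  have hint : Integrable (fun ω' => W (U ω) (U ω') * Γ (θ ω s) (θ ω' s)) P := by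
    simpa only [graphonInteraction, Pi.sub_def, add_sub_cancel_left] using
      (integrable_interaction (P := P) hh hC hθ ω s).sub (integrable_const (F (θ ω s)))
  have hmeas : StronglyMeasurable fun q : ℝ × Torus => W (U ω) q.1 * Γ (θ ω s) q.2 :=
    ((hW.comp (measurable_const.prodMk measurable_fst)).mul
      (hΓ.measurable.comp (measurable_const.prodMk measurable_snd))).stronglyMeasurable
  calc meanVelocity P (graphonInteraction F Γ W U) θ ω s
      = F (θ ω s) + ∫ ω', W (U ω) (U ω') * Γ (θ ω s) (θ ω' s) ∂P := by
        simp only [meanVelocity, graphonInteraction]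
        rw [integral_add (integrable_const _) hint, integral_const, probReal_univ, one_smul]
    _ = F (θ ω s) + ∫ y, ∫ u, W (U ω) y * Γ (θ ω s) u ∂κ y ∂(P.map U) := by
        rw [integral_integral_of_hasCondDistrib hκ hmeas hint]
    _ = F (θ ω s) + ∫ y, W (U ω) y * ∫ u, Γ (θ ω s) u ∂κ y ∂(P.map U) := by
        simp only [integral_const_mul]

theorem drift_eq_integral_meanVelocity (hF : Continuous F) (hΓ : Continuous (uncurry Γ))
    (hW : Measurable (uncurry W)) (hM : ∀ x y, ‖W x y‖ ≤ M) (hU : Measurable U)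
    (hUlaw : P.map U = volume.restrict I01) (hθ : Measurable (uncurry θ)) {t : ℝ} (ht : 0 ≤ t)
    {κ : ℝ → Kernel ℝ Torus} [∀ s, IsSFiniteKernel (κ s)]
    (hκ : ∀ s ∈ Icc 0 t, HasCondDistrib (fun ω => θ ω s) U (κ s) P) {ω : Ω}
    (hcont : ContinuousOn (θ ω) (Icc 0 t)) :
    drift F Γ W (fun y s => κ s y) (U ω) (θ ω) t =
      ∫ s in 0..t, meanVelocity P (graphonInteraction F Γ W U) θ ω s := by
  obtain ⟨C, hC⟩ := exists_norm_graphonInteraction_le (U := U) hF hΓ hM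
  have hh := measurable_uncurry_graphonInteraction hF.measurable hΓ.measurable hW hU
  have hvel : EqOn (fun s => ∫ y in I01, W (U ω) y * ∫ u, Γ (θ ω s) u ∂κ s y)
      (fun s => meanVelocity P (graphonInteraction F Γ W U) θ ω s - F (θ ω s)) (Icc 0 t) :=
    fun s hs => eq_sub_of_add_eq' (by
      rw [meanVelocity_graphonInteraction hF hΓ hW hM hU hθ (hκ s hs), hUlaw])
  have hvelInt : IntegrableOn (meanVelocity P (graphonInteraction F Γ W U) θ ω) (Icc 0 t) :=
    (intervalIntegrable_iff_integrableOn_Icc_of_le ht).1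
      (intervalIntegrable_meanVelocity hh hC hθ ω 0 t)
  have hFInt : IntegrableOn (fun s => F (θ ω s)) (Icc 0 t) :=
    (hF.comp_continuousOn hcont).integrableOn_Icc
  rw [drift, setIntegral_congr_fun measurableSet_Icc hvel, integral_sub hvelInt hFInt,
    add_sub_cancel, integral_Icc_eq_integral_Ioc, intervalIntegral.integral_of_le ht]


variable {T : ℝ} (hT : 0 ≤ T)

theorem isMeanFieldSolution_of_picardMap_eq (hF : Continuous F) (hΓ : Continuous (uncurry Γ))
    (hW : Measurable (uncurry W)) (hM : ∀ x y, ‖W x y‖ ≤ M) (hU : Measurable U)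
    (hUlaw : P.map U = volume.restrict I01) (hb : ∀ ω, ContinuousOn (b ω) (Icc 0 T))
    (hθ : Measurable (uncurry θ))
    (hfix : picardMap P (graphonInteraction F Γ W U) (torusState θ0 (clampPath hT b)) θ = θ) :
    IsMeanFieldSolution T P F Γ W U θ0 b θ fun y s => condDistrib (fun ω => θ ω s) U P y := by
  obtain ⟨C, hC⟩ := exists_norm_graphonInteraction_le (U := U) hF hΓ hM
  have hh := measurable_uncurry_graphonInteraction hF.measurable hΓ.measurable hW hU
  have hcont (ω : Ω) : Continuous (θ ω) := by
    rw [← hfix]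
    exact continuous_picardMap hh hC hθ (continuous_torusState (continuous_clampPath hT (hb ω)))
  have hmeas (s : ℝ) : Measurable fun ω => θ ω s := hθ.of_uncurry_right
  have hκ (s : ℝ) : HasCondDistrib (fun ω => θ ω s) U (condDistrib (fun ω => θ ω s) U P) P :=
    ⟨(hU.prodMk (hmeas s)).aemeasurable, (compProd_map_condDistrib (hmeas s).aemeasurable).symm⟩
  refine ⟨hmeas, fun ω => (hcont ω).continuousOn, fun s => (condDistrib _ U P).measurable,
    fun y s => inferInstance, fun s _ S hS A hA => ?_, .of_forall fun ω t ht => ?_⟩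
  · rw [(hasCondDistrib_iff_measure_eq_setLIntegral hU (hmeas s)).1 (hκ s) S hS A hA, hUlaw,
      Measure.restrict_restrict hS]
  · rw [drift_eq_integral_meanVelocity hF hΓ hW hM hU hUlaw hθ ht.1 (fun s _ => hκ s)
      (hcont ω).continuousOn, ← eqOn_clampPath (X := b) hT ω ht]
    exact (congrFun₂ hfix ω t).symm

theorem IsMeanFieldSolution.ae_eqOn_picardMap (hF : Continuous F) (hΓ : Continuous (uncurry Γ))
    (hW : Measurable (uncurry W)) (hM : ∀ x y, ‖W x y‖ ≤ M) (hU : Measurable U)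
    (hUlaw : P.map U = volume.restrict I01) {μ : ℝ → ℝ → Measure Torus}
    (hsol : IsMeanFieldSolution T P F Γ W U θ0 b θ μ) :
    ∀ᵐ ω ∂P, EqOn (clampPath hT θ ω) (picardMap P (graphonInteraction F Γ W U)
      (torusState θ0 (clampPath hT b)) (clampPath hT θ) ω) (Icc 0 T) := by
  let κ (s : ℝ) : Kernel ℝ Torus := ⟨fun y => μ y s, hsol.kerMeas s⟩
  have (s : ℝ) : IsMarkovKernel (κ s) := ⟨fun y => hsol.kerProb y s⟩
  have hκ : ∀ s ∈ Icc 0 T, HasCondDistrib (fun ω => clampPath hT θ ω s) U (κ s) P := by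
    intro s hs
    simp only [eqOn_clampPath hT _ hs]
    refine (hasCondDistrib_iff_measure_eq_setLIntegral hU (hsol.meas s)).2 fun S hS A hA => ?_
    rw [hUlaw, Measure.restrict_restrict hS]
    exact hsol.disint s hs S hS A hA
  filter_upwards [hsol.sde] with ω hω t ht
  have hsub : Icc 0 t ⊆ Icc 0 T := Icc_subset_Icc_right ht.2
  have hdrift : drift F Γ W μ (U ω) (θ ω) t =
      ∫ s in 0..t, meanVelocity P (graphonInteraction F Γ W U) (clampPath hT θ) ω s := by
    rw [← drift_congr ((eqOn_clampPath hT ω).mono hsub)]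
    exact drift_eq_integral_meanVelocity hF hΓ hW hM hU hUlaw
      (measurable_uncurry_clampPath hT hsol.meas hsol.cont) ht.1 (fun s hs => hκ s (hsub hs))
      (continuous_clampPath hT (hsol.cont ω)).continuousOn
  rw [eqOn_clampPath hT ω ht, hω t ht, hdrift, picardMap, torusState, eqOn_clampPath hT ω ht]

end Torus

theorem mean_field_equation_existence_and_uniqueness_general
    {Ω : Type*} [MeasurableSpace Ω] {T : ℝ} (hT : 0 ≤ T) {P : Measure Ω} [IsProbabilityMeasure P]
    {F : Torus → ℝ} {Γ : Torus → Torus → ℝ} {KF KΓ M : NNReal} (hF : LipschitzWith KF F)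
    (hΓ : LipschitzWith KΓ (Function.uncurry Γ)) {W : ℝ → ℝ → ℝ}
    (hW : Measurable (Function.uncurry W)) (hM : ∀ x y, ‖W x y‖ ≤ M)
    {U : Ω → ℝ} (hU : Measurable U) (hUlaw : P.map U = volume.restrict I01)
    {θ0 : Ω → Torus} (hθ0 : Measurable θ0) {B : Ω → ℝ → ℝ}
    (hBmeas : ∀ s, Measurable fun ω => B ω s) (hBcont : ∀ ω, ContinuousOn (B ω) (Icc 0 T)) :
    (∃ (θ : Ω → ℝ → Torus) (μker : ℝ → ℝ → Measure Torus),
        IsMeanFieldSolution T P F Γ W U θ0 B θ μker) ∧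
    (∀ (θ θ' : Ω → ℝ → Torus) (μker μker' : ℝ → ℝ → Measure Torus),
        IsMeanFieldSolution T P F Γ W U θ0 B θ μker →
        IsMeanFieldSolution T P F Γ W U θ0 B θ' μker' →
        ∀ᵐ ω ∂P, ∀ t ∈ Icc (0:ℝ) T, θ ω t = θ' ω t) := by
  obtain ⟨C, hC⟩ := exists_norm_graphonInteraction_le (U := U) hF.continuous hΓ.continuous hM
  have hh := measurable_uncurry_graphonInteraction hF.continuous.measurable
    hΓ.continuous.measurable hW hU
  have hL := lipschitzWith_graphonInteraction (U := U) hF hΓ hM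
  constructor
  · have hψ := measurable_uncurry_torusState hθ0 (measurable_uncurry_clampPath hT hBmeas hBcont)
    obtain ⟨θ, hθ, hfix⟩ :=
      exists_fixedPoint_picardMap (P := P) hh hC hL hψ lipschitzWith_torusState
    exact ⟨θ, _, isMeanFieldSolution_of_picardMap_eq hT hF.continuous hΓ.continuous hW hM hU hUlaw
      hBcont hθ hfix⟩
  · intro θ θ' _ _ hθ hθ'
    have hfix := hθ.ae_eqOn_picardMap hT hF.continuous hΓ.continuous hW hM hU hUlaw
    have hfix' := hθ'.ae_eqOn_picardMap hT hF.continuous hΓ.continuous hW hM hU hUlaw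
    filter_upwards [ae_eqOn_of_eqOn_picardMap hh hC hL lipschitzWith_torusState
      (measurable_uncurry_clampPath hT hθ.meas hθ.cont)
      (measurable_uncurry_clampPath hT hθ'.meas hθ'.cont)
      (left_mem_Icc.2 hT) hfix hfix'] with ω hω t ht
    exact (eqOn_clampPath hT ω ht).symm.trans ((hω ht).trans (eqOn_clampPath hT ω ht))

/-- Proposition 2.1, existence and pathwise uniqueness: for data
`(U, θ0, B)` as above there exists a solution of the nonlinear equation for the labeled
graphon `W`, and any two solutions with the same data are `P`-a.s. equal on `[0,T]`. -/
theorem mean_field_equation_existence_and_uniqueness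
    {Ω : Type*} [MeasurableSpace Ω] (T : ℝ) (hT : 0 < T)
    (P : Measure Ω) [IsProbabilityMeasure P]
    (F : Torus → ℝ) (Γ : Torus → Torus → ℝ) (hF : BddLip F) (hΓ : BddLip2 Γ)
    (W : ℝ → ℝ → ℝ) (hW : IsGraphon W)
    (μ0 : Measure Torus) (hμ0 : IsProbabilityMeasure μ0)
    (U : Ω → ℝ) (θ0 : Ω → Torus) (B : Ω → ℝ → ℝ)
    (hdata : MeanFieldData T P μ0 U θ0 B) :
    (∃ (θ : Ω → ℝ → Torus) (μker : ℝ → ℝ → Measure Torus),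
        IsMeanFieldSolution T P F Γ W U θ0 B θ μker) ∧
    (∀ (θ θ' : Ω → ℝ → Torus) (μker μker' : ℝ → ℝ → Measure Torus),
        IsMeanFieldSolution T P F Γ W U θ0 B θ μker →
        IsMeanFieldSolution T P F Γ W U θ0 B θ' μker' →
        ∀ᵐ ω ∂P, ∀ t ∈ Set.Icc (0:ℝ) T, θ ω t = θ' ω t) := by
  obtain ⟨hU, hUlaw, hθ0, -, ⟨-, hBcont, hBmeas, -⟩, -⟩ := hdata
  have hM (x y : ℝ) : ‖W x y‖ ≤ (1 : NNReal) :=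
    (Real.norm_of_nonneg (hW.2.1 x y).1).trans_le (hW.2.1 x y).2
  exact mean_field_equation_existence_and_uniqueness_general hT.le hF.1.choose_spec
    hΓ.1.choose_spec hW.1 hM hU hUlaw hθ0 hBmeas hBcont
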